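/- For every n ≥ 1 and every binary head tree T with n leaves, the dependency tree bht2dep(T) is projective, i.e., for every position i the set of descendants of i under bht2dep(T) is an interval of consecutive positions. -/

import Mathlib

/-- Binary head trees (BHTs). -/
inductive BHT : Type where
  | leaf : BHT
  | nodeL (l r : BHT) : BHT
  | nodeR (l r : BHT) : BHT

/-- Number of leaves of a BHT. -/
def BHT.numLeaves : BHT → ℕ
  | .leaf => 1
  | .nodeL l r => l.numLeaves + r.numLeaves
  | .nodeR l r => l.numLeaves + r.numLeaves

/-- Head position of a BHT whose span of leaf positions starts at `i`. -/
def BHT.headAt : BHT → ℕ → ℕ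
  | .leaf, i => i
  | .nodeL l _, i => l.headAt i
  | .nodeR l r, i => r.headAt (i + l.numLeaves)

/-- Head position of a BHT placed over positions `0, …, numLeaves - 1`. -/
def BHT.head (T : BHT) : ℕ := T.headAt 0

/-- Arc set of a BHT whose span of leaf positions starts at `i`. -/
def BHT.arcsAt : BHT → ℕ → Set (ℕ × ℕ)
  | .leaf, _ => ∅
  | .nodeL l r, i =>
      insert (l.headAt i, r.headAt (i + l.numLeaves)) (l.arcsAt i ∪ r.arcsAt (i + l.numLeaves))
  | .nodeR l r, i =>
      insert (r.headAt (i + l.numLeaves), l.headAt i) (l.arcsAt i ∪ r.arcsAt (i + l.numLeaves))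

/-- Arc set of a BHT placed over positions `0, …, numLeaves - 1`. -/
def BHT.arcs (T : BHT) : Set (ℕ × ℕ) := T.arcsAt 0

/-- `S` is a subtree of `T` (placed over positions `0, …, numLeaves - 1`) whose
leaf span starts at absolute position `i`. -/
inductive BHT.SubtreeAt : BHT → ℕ → BHT → Prop
  | refl (T : BHT) : BHT.SubtreeAt T 0 T
  | inlL (l r S : BHT) (i : ℕ) : BHT.SubtreeAt l i S → BHT.SubtreeAt (BHT.nodeL l r) i S
  | inrL (l r S : BHT) (i : ℕ) :
      BHT.SubtreeAt r i S → BHT.SubtreeAt (BHT.nodeL l r) (l.numLeaves + i) S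
  | inlR (l r S : BHT) (i : ℕ) : BHT.SubtreeAt l i S → BHT.SubtreeAt (BHT.nodeR l r) i S
  | inrR (l r S : BHT) (i : ℕ) :
      BHT.SubtreeAt r i S → BHT.SubtreeAt (BHT.nodeR l r) (l.numLeaves + i) S

/-- `bht2dep T j = some i` if `i` is the unique position with `(i, j) ∈ arcs T`,
and `none` if `j` has no incoming arc. -/
noncomputable def bht2dep (n : ℕ) (T : BHT) : Fin n → Option (Fin n) := fun j =>
  letI := Classical.dec (∃! i : Fin n, ((i : ℕ), (j : ℕ)) ∈ T.arcs)
  if h : ∃! i : Fin n, ((i : ℕ), (j : ℕ)) ∈ T.arcs then some h.choose else none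

/-- `head` is a dependency tree on `n` words: exactly one root (position with
`head r = none`), and every position reaches the root by iterating `head`. -/
def IsDepTree {n : ℕ} (head : Fin n → Option (Fin n)) : Prop :=
  ∃ r : Fin n, head r = none ∧ (∀ r' : Fin n, head r' = none → r' = r) ∧
    ∀ j : Fin n, Relation.ReflTransGen (fun a b => head a = some b) j r

/-- A dependency tree is projective if every position's set of descendants is an
interval of consecutive positions. -/
def Projective {n : ℕ} (head : Fin n → Option (Fin n)) : Prop :=
  ∀ i : Fin n, ∃ a b : Fin n,
    ∀ j : Fin n, Relation.ReflTransGen (fun x y => head x = some y) j i ↔ (a ≤ j ∧ j ≤ b)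

/-- The six hexatags: `tL`/`tR` are terminal tags (leaf that is a left/right child);
`leftL`/`leftR` are `⇐L`/`⇐R` (internal left child with head-label L/R);
`rightL`/`rightR` are `⇒L`/`⇒R` (internal right child with head-label L/R). -/
inductive Hexatag : Type where
  | tL | tR | leftL | leftR | rightL | rightR
deriving DecidableEq

/-- A hexatag is terminal if it is `tL` or `tR`. -/
def Hexatag.isTerminal : Hexatag → Prop
  | .tL => True
  | .tR => True
  | _ => False

/-- In-order linearization; the Boolean records whether the current subtree is a
right child of its parent (the root counts as a left child by convention). -/
def BHT.hexatagsAux : BHT → Bool → List Hexatag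
  | .leaf, false => [.tL]
  | .leaf, true => [.tR]
  | .nodeL l r, b =>
      l.hexatagsAux false ++ (if b then Hexatag.rightL else Hexatag.leftL) :: r.hexatagsAux true
  | .nodeR l r, b =>
      l.hexatagsAux false ++ (if b then Hexatag.rightR else Hexatag.leftR) :: r.hexatagsAux true

/-- The hexatag linearization of a BHT. -/
def BHT.hexatags (T : BHT) : List Hexatag := T.hexatagsAux false

/-- The tags emitted for the leaves of a BHT, in left-to-right order. -/
def BHT.leafTagsAux : BHT → Bool → List Hexatag
  | .leaf, false => [.tL]
  | .leaf, true => [.tR]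
  | .nodeL l r, _ => l.leafTagsAux false ++ r.leafTagsAux true
  | .nodeR l r, _ => l.leafTagsAux false ++ r.leafTagsAux true

/-- The tags emitted for the leaves of a BHT in left-to-right order (root
counts as a left child by convention). -/
def BHT.leafTags (T : BHT) : List Hexatag := T.leafTagsAux false

/-- Partial BHTs: binary head trees possibly containing a dummy placeholder. -/
inductive PBHT : Type where
  | dummy : PBHT
  | leaf : PBHT
  | nodeL (l r : PBHT) : PBHT
  | nodeR (l r : PBHT) : PBHT
deriving DecidableEq

/-- Does a partial BHT contain a dummy? -/
def PBHT.hasDummy : PBHT → Bool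
  | .dummy => true
  | .leaf => false
  | .nodeL l r => l.hasDummy || r.hasDummy
  | .nodeR l r => l.hasDummy || r.hasDummy

/-- Substitute `u` for the dummy in a partial BHT. -/
def PBHT.subst : PBHT → PBHT → PBHT
  | .dummy, u => u
  | .leaf, _ => .leaf
  | .nodeL l r, u => .nodeL (l.subst u) (r.subst u)
  | .nodeR l r, u => .nodeR (l.subst u) (r.subst u)

/-- One step of the left-corner decoder on a stack of partial BHTs. -/
def hexStep : List PBHT → Hexatag → Option (List PBHT)
  | st, .tL => some (.leaf :: st)
  | t :: st, .tR => if t.hasDummy then some (t.subst .leaf :: st) else none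
  | t :: st, .leftL => some (.nodeL t .dummy :: st)
  | t :: st, .leftR => some (.nodeR t .dummy :: st)
  | t :: u :: st, .rightL =>
      if u.hasDummy then some (u.subst (.nodeL t .dummy) :: st) else none
  | t :: u :: st, .rightR =>
      if u.hasDummy then some (u.subst (.nodeR t .dummy) :: st) else none
  | _, _ => none

/-- The left-corner decoder: run the stack operations; succeed iff every
operation is defined and the final stack is a single dummy-free tree. -/
def tags2bht (τ : List Hexatag) : Option PBHT :=
  match τ.foldlM hexStep ([] : List PBHT) with
  | some [t] => if t.hasDummy then none else some t
  | _ => none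

/-- Embedding of BHTs into partial BHTs. -/
def BHT.toPBHT : BHT → PBHT
  | .leaf => .leaf
  | .nodeL l r => .nodeL l.toPBHT r.toPBHT
  | .nodeR l r => .nodeR l.toPBHT r.toPBHT

/-- Stack-count increment of a hexatag. -/
def Hexatag.delta : Hexatag → ℤ
  | .tL => 1
  | .tR => 0
  | .leftL => 0
  | .leftR => 0
  | .rightL => -1
  | .rightR => -1

/-- Running stack count `sₖ` after the first `k` tags of `τ`. -/
def stackCount (τ : List Hexatag) (k : ℕ) : ℤ :=
  ((τ.take k).map Hexatag.delta).sum

/-- Validity of a hexatag list (0-indexed: Lean index `k` is 1-indexed position `k+1`). -/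
def ValidTags (τ : List Hexatag) : Prop :=
  (τ.length % 2 = 1 ∧
    ∀ k : ℕ, ∀ t : Hexatag, τ[k]? = some t →
      (k % 2 = 0 → t.isTerminal) ∧ (k % 2 = 1 → ¬ t.isTerminal)) ∧
  τ[0]? = some Hexatag.tL ∧
  (∀ k : ℕ, ∀ t : Hexatag, τ[k]? = some t →
    (t = Hexatag.rightL ∨ t = Hexatag.rightR) → 2 ≤ stackCount τ k) ∧
  stackCount τ τ.length = 1

/-!
Read every arc from dependent to head. Internal nodes labeled L and R then act alike: each takes the
in-trees of two adjacent spans and hangs the root of one below the root of the other. This changes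
the set of descendants of one position only, the surviving root, and that set is the whole joint
span; every other set of descendants is an interval by induction.
-/

open Relation Set

section Descendants

variable {α β : Type*} {r q : α → α → Prop} {S : Set α} {a b k : α}

/-- The descendants of `k` when `r x y` says that `y` is the head of `x`: the elements from which
iterating `r` reaches `k`, including `k` itself. -/
def descendants (r : α → α → Prop) (k : α) : Set α := {j | ReflTransGen r j k}

theorem self_mem_descendants : k ∈ descendants r k := ReflTransGen.refl

theorem descendants_mono (h : r ≤ q) : descendants r k ⊆ descendants q k :=
  fun j hj => ReflTransGen.mono h j k hj

theorem descendants_subset (hk : k ∈ S) (hS : ∀ x y, r x y → y ∈ S → x ∈ S) :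
    descendants r k ⊆ S := fun j hj => by
  induction hj using ReflTransGen.head_induction_on with
  | refl => exact hk
  | head hxy _ hy => exact hS _ _ hxy hy

theorem descendants_eq_singleton (h : ∀ x, ¬ r x k) : descendants r k = {k} :=
  (descendants_subset (mem_singleton k) fun x _ hxy hy => absurd (hy ▸ hxy) (h x)).antisymm
    (singleton_subset_iff.2 self_mem_descendants)

theorem descendants_onFun {f : β → α} (hf : f.Injective)
    (hr : ∀ x z, r (f x) z → z ∈ range f) (y : β) :
    descendants (Function.onFun r f) y = f ⁻¹' descendants r (f y) := by
  refine Subset.antisymm (fun x hx => ReflTransGen.lift f le_rfl x y hx) fun x hx => ?_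
  have lifts : descendants r (f y) ⊆
      {z | ∀ x, f x = z → x ∈ descendants (Function.onFun r f) y} := by
    refine descendants_subset (fun x hx => hf hx ▸ self_mem_descendants) ?_
    rintro _ z hz ih x rfl
    obtain ⟨w, rfl⟩ := hr x z hz
    exact ReflTransGen.head hz (ih w rfl)
  exact lifts hx x rfl

/-- The head relation obtained from `r` and `q` by making `a` the head of `b`. For trees on disjoint
sets with `b` the root of `q`, this hangs the tree `q` below the vertex `a` of `r`. -/
def graft (r q : α → α → Prop) (a b : α) : α → α → Prop :=
  fun x y => (x = b ∧ y = a) ∨ r x y ∨ q x y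

theorem le_graft_left : r ≤ graft r q a b := fun _ _ h => .inr (.inl h)

theorem le_graft_right : q ≤ graft r q a b := fun _ _ h => .inr (.inr h)

theorem graft_root_rel : graft r q a b b a := .inl ⟨rfl, rfl⟩

end Descendants

section InTree

variable {α : Type*} {r q : α → α → Prop} {S S' : Set α} {a b k m : α}

/-- `r` is the head relation of a rooted tree with vertex set `S` and root `m`: arcs run from
dependents to heads inside `S`, heads are unique, and iterating `r` leads from all of `S` to `m`,
which has no head. -/
structure IsInTree (r : α → α → Prop) (S : Set α) (m : α) : Prop where
  source_mem : ∀ {x y}, r x y → x ∈ S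
  target_mem : ∀ {x y}, r x y → y ∈ S
  root_mem : m ∈ S
  not_rel_root : ∀ y, ¬ r m y
  rightUnique : Relator.RightUnique r
  subset_descendants_root : S ⊆ descendants r m

namespace IsInTree

theorem descendants_subset_of_mem (hr : IsInTree r S m) (hk : k ∈ S) : descendants r k ⊆ S :=
  descendants_subset hk fun _ _ hxy _ => hr.source_mem hxy

theorem descendants_root (hr : IsInTree r S m) : descendants r m = S :=
  (hr.descendants_subset_of_mem hr.root_mem).antisymm hr.subset_descendants_root

theorem eq_root_of_root_mem_descendants (hr : IsInTree r S m) (h : m ∈ descendants r k) : k = m :=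
  (reflTransGen_iff_eq hr.not_rel_root).1 h

theorem isInTree_graft (hr : IsInTree r S m) (hq : IsInTree q S' b) (hd : Disjoint S S')
    (ha : a ∈ S) : IsInTree (graft r q a b) (S ∪ S') m where
  source_mem := by
    rintro x y (⟨rfl, -⟩ | h | h)
    exacts [.inr hq.root_mem, .inl (hr.source_mem h), .inr (hq.source_mem h)]
  target_mem := by
    rintro x y (⟨-, rfl⟩ | h | h)
    exacts [.inl ha, .inl (hr.target_mem h), .inr (hq.target_mem h)]
  root_mem := .inl hr.root_mem
  not_rel_root := by
    rintro y (⟨rfl, -⟩ | h | h)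
    exacts [hd.notMem_of_mem_left hr.root_mem hq.root_mem, hr.not_rel_root y h,
      hd.notMem_of_mem_left hr.root_mem (hq.source_mem h)]
  rightUnique := by
    rintro x y z (⟨rfl, rfl⟩ | hy | hy) (⟨hx, rfl⟩ | hz | hz)
    · rfl
    · exact (hd.notMem_of_mem_left (hr.source_mem hz) hq.root_mem).elim
    · exact (hq.not_rel_root z hz).elim
    · exact (hd.notMem_of_mem_left (hr.source_mem hy) (hx ▸ hq.root_mem)).elim
    · exact hr.rightUnique hy hz
    · exact (hd.notMem_of_mem_left (hr.source_mem hy) (hq.source_mem hz)).elim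
    · exact (hq.not_rel_root y (hx ▸ hy)).elim
    · exact (hd.notMem_of_mem_left (hr.source_mem hz) (hq.source_mem hy)).elim
    · exact hq.rightUnique hy hz
  subset_descendants_root := by
    have hS : S ⊆ descendants (graft r q a b) m :=
      hr.subset_descendants_root.trans (descendants_mono le_graft_left)
    refine union_subset hS fun x hx => ?_
    have hxb : x ∈ descendants (graft r q a b) b :=
      descendants_mono le_graft_right (hq.subset_descendants_root hx)
    exact ReflTransGen.trans hxb (.head graft_root_rel (hS ha))

theorem descendants_graft_of_mem_right (hr : IsInTree r S m) (hq : IsInTree q S' b)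
    (hd : Disjoint S S') (ha : a ∈ S) (hk : k ∈ S') :
    descendants (graft r q a b) k = descendants q k := by
  have notMem_left : ∀ y ∈ descendants q k, y ∉ S := fun y hy =>
    hd.notMem_of_mem_right (hq.descendants_subset_of_mem hk hy)
  refine (descendants_subset self_mem_descendants ?_).antisymm
    (descendants_mono le_graft_right)
  rintro x y (⟨-, rfl⟩ | h | h) hy
  exacts [(notMem_left _ hy ha).elim, (notMem_left y hy (hr.target_mem h)).elim, .head h hy]

theorem descendants_graft_of_notMem_right (hr : IsInTree r S m) (hq : IsInTree q S' b)
    (hd : Disjoint S S') (hk : k ∉ S') (ha : a ∉ descendants r k) :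
    descendants (graft r q a b) k = descendants r k := by
  have notMem_right : descendants r k ⊆ S'ᶜ := descendants_subset hk
    fun _ _ hxy _ => hd.notMem_of_mem_left (hr.source_mem hxy)
  refine (descendants_subset self_mem_descendants ?_).antisymm
    (descendants_mono le_graft_left)
  rintro x y (⟨-, rfl⟩ | h | h) hy
  exacts [(ha hy).elim, .head h hy, (notMem_right hy (hq.target_mem h)).elim]

theorem ordConnected_descendants_graft [Preorder α] (hr : IsInTree r S m) (hq : IsInTree q S' b)
    (hd : Disjoint S S') (hS : (S ∪ S').OrdConnected)
    (hrc : ∀ k, (descendants r k).OrdConnected) (hqc : ∀ k, (descendants q k).OrdConnected)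
    (k : α) : (descendants (graft r q m b) k).OrdConnected := by
  by_cases hk : k ∈ S'
  · rw [hr.descendants_graft_of_mem_right hq hd hr.root_mem hk]
    exact hqc k
  by_cases hm : m ∈ descendants r k
  · rw [hr.eq_root_of_root_mem_descendants hm,
      (hr.isInTree_graft hq hd hr.root_mem).descendants_root]
    exact hS
  · rw [hr.descendants_graft_of_notMem_right hq hd hk hm]
    exact hrc k

end IsInTree

end InTree

theorem exists_eq_Icc_of_ordConnected {α : Type*} [LinearOrder α] {s : Set α}
    (hs : s.OrdConnected) (hfin : s.Finite) (hne : s.Nonempty) : ∃ a b, s = Icc a b := by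
  obtain ⟨a, ha, hmin⟩ := exists_min_image s id hfin hne
  obtain ⟨b, hb, hmax⟩ := exists_max_image s id hfin hne
  exact ⟨a, b, Subset.antisymm (fun x hx => ⟨hmin x hx, hmax x hx⟩) (hs.out ha hb)⟩

theorem projective_of_ordConnected_descendants {n : ℕ} {head : Fin n → Option (Fin n)}
    (h : ∀ i, (descendants (fun x y => head x = some y) i).OrdConnected) : Projective head := by
  intro i
  obtain ⟨a, b, hab⟩ :=
    exists_eq_Icc_of_ordConnected (h i) (toFinite _) ⟨i, self_mem_descendants⟩
  exact ⟨a, b, fun j => Set.ext_iff.1 hab j⟩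

namespace BHT

variable (l r T : BHT) (s : ℕ)

/-- The positions covered by a BHT whose leftmost leaf is at `s`. -/
def span : Set ℕ := Ico s (s + T.numLeaves)

/-- The head relation of a BHT whose leftmost leaf is at `s`: `T.headRel s x y` says that `y` is the
head of `x`, so that arcs are read backwards. -/
def headRel (x y : ℕ) : Prop := (y, x) ∈ T.arcsAt s

theorem not_headRel_leaf (x y : ℕ) : ¬ leaf.headRel s x y := notMem_empty _

theorem headRel_nodeL : (nodeL l r).headRel s =
    graft (l.headRel s) (r.headRel (s + l.numLeaves)) (l.headAt s)
      (r.headAt (s + l.numLeaves)) := by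
  ext x y
  simp only [headRel, arcsAt, graft, mem_insert_iff, mem_union, Prod.mk.injEq, and_comm]

theorem headRel_nodeR : (nodeR l r).headRel s =
    graft (r.headRel (s + l.numLeaves)) (l.headRel s) (r.headAt (s + l.numLeaves))
      (l.headAt s) := by
  ext x y
  simp only [headRel, arcsAt, graft, mem_insert_iff, mem_union, Prod.mk.injEq, and_comm, or_comm]

theorem span_leaf : leaf.span s = {s} := by
  ext; simp only [span, numLeaves, mem_Ico, mem_singleton_iff]; lia

theorem disjoint_span : Disjoint (l.span s) (r.span (s + l.numLeaves)) :=
  Ico_disjoint_Ico_same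

theorem span_union_span : l.span s ∪ r.span (s + l.numLeaves) =
    Ico s (s + (l.numLeaves + r.numLeaves)) := by
  rw [span, span, Ico_union_Ico_eq_Ico (by lia) (by lia), add_assoc]

theorem isInTree_headRel : IsInTree (T.headRel s) (T.span s) (T.headAt s) := by
  induction T generalizing s with
  | leaf =>
    rw [span_leaf]
    exact {
      source_mem := fun h => (not_headRel_leaf s _ _ h).elim
      target_mem := fun h => (not_headRel_leaf s _ _ h).elim
      root_mem := rfl
      not_rel_root := not_headRel_leaf s s
      rightUnique := fun x y _ h => (not_headRel_leaf s x y h).elim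
      subset_descendants_root := singleton_subset_iff.2 self_mem_descendants }
  | nodeL l r ihl ihr =>
    rw [headRel_nodeL, span, numLeaves, ← span_union_span]
    exact (ihl s).isInTree_graft (ihr _) (disjoint_span l r s) (ihl s).root_mem
  | nodeR l r ihl ihr =>
    rw [headRel_nodeR, span, numLeaves, ← span_union_span, union_comm]
    exact (ihr _).isInTree_graft (ihl s) (disjoint_span l r s).symm (ihr _).root_mem

theorem ordConnected_descendants_headRel (k : ℕ) :
    (descendants (T.headRel s) k).OrdConnected := by
  induction T generalizing s k with
  | leaf =>
    rw [descendants_eq_singleton fun x => not_headRel_leaf s x k]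
    exact ordConnected_singleton
  | nodeL l r ihl ihr =>
    rw [headRel_nodeL]
    refine (l.isInTree_headRel s).ordConnected_descendants_graft (r.isInTree_headRel _)
      (disjoint_span l r s) ?_ (ihl s) (ihr _) k
    exact span_union_span l r s ▸ ordConnected_Ico
  | nodeR l r ihl ihr =>
    rw [headRel_nodeR]
    refine (r.isInTree_headRel _).ordConnected_descendants_graft (l.isInTree_headRel s)
      (disjoint_span l r s).symm ?_ (ihr _) (ihl s) k
    exact union_comm (l.span s) _ ▸ span_union_span l r s ▸ ordConnected_Ico

end BHT

theorem bht2dep_eq_some_iff {n : ℕ} {T : BHT} {x y : Fin n} :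
    bht2dep n T x = some y ↔ T.headRel 0 x y := by
  have head_unique : ∀ i j : Fin n, T.headRel 0 x i → T.headRel 0 x j → i = j :=
    fun _ _ hi hj => Fin.ext ((T.isInTree_headRel 0).rightUnique hi hj)
  unfold bht2dep
  split_ifs with h
  · have hchoose : T.headRel 0 x h.choose := h.choose_spec.1
    rw [Option.some.injEq]
    exact ⟨fun hy => hy ▸ hchoose, head_unique _ _ hchoose⟩
  · exact iff_of_false not_false fun hy => h ⟨y, hy, fun i hi => head_unique i y hi hy⟩

theorem bht2dep_projective (n : ℕ) (hn : 1 ≤ n) (T : BHT) (hT : T.numLeaves = n) :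
    Projective (bht2dep n T) := by
  have headRel_eq : (fun x y => bht2dep n T x = some y) = Function.onFun (T.headRel 0) Fin.val := by
    ext x y
    exact bht2dep_eq_some_iff
  have head_mem_range (x : Fin n) (z : ℕ) (hz : T.headRel 0 x z) :
      z ∈ range (Fin.val (n := n)) := by
    have hzT : z < 0 + T.numLeaves := ((T.isInTree_headRel 0).target_mem hz).2
    exact ⟨⟨z, by lia⟩, rfl⟩
  refine projective_of_ordConnected_descendants fun i => ?_
  rw [headRel_eq, descendants_onFun Fin.val_injective head_mem_range]
  exact (T.ordConnected_descendants_headRel 0 i).preimage_mono Fin.val_strictMono.monotone
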